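/- Let q₁,q₂,q₃ ∈ ℝ[t] be polynomials such that every common divisor of q₁,q₂,q₃ is a unit, and let n = max(deg q₁, deg q₂, deg q₃). Let α,β,γ,δ ∈ ℝ with αδ−βγ ≠ 0, and let ψ = (αt+β)/(γt+δ) ∈ ℝ(t). Let Q be a real 3×3 matrix, and let A,B ∈ ℝ[t] be coprime polynomials with B ≠ 0 such that for each i ∈ {1,2,3}, Qᵢ₁·q₁(t) + Qᵢ₂·q₂(t) + Qᵢ₃·q₃(t) = (A(t)/B(t))·qᵢ(ψ) holds in ℝ(t). Then B(t) is a unit in ℝ[t], i.e. a nonzero constant. -/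

import Mathlib

open Polynomial

/-!
Let `v` be a valuation of `ℝ(t)` that is nonnegative (written additively) on `ℝ[t]`, hence trivial
on `ℝ`. Then some `qᵢ(ψ)` has valuation at most `0`: if `v(ψ) < 0`, then `v(qᵢ(ψ)) = deg qᵢ · v(ψ)`
whenever `qᵢ ≠ 0`; and if `v(ψ) ≥ 0`, a Bézout relation `∑ uᵢ qᵢ = 1`, evaluated at `ψ`, forbids all
`qᵢ(ψ)` to have positive valuation. As every `(A / B) qᵢ(ψ)` is a polynomial, `v(A / B) ≥ 0`.
This holds for all such `v`, so `A / B` is integral over `ℝ[t]`, that is, `B ∣ A`.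
-/

section Ideal

variable {R ι : Type*} [CommSemiring R] [IsPrincipalIdealRing R]

lemma span_range_eq_top_of_forall_dvd_isUnit {f : ι → R}
    (hf : ∀ d : R, (∀ i, d ∣ f i) → IsUnit d) : Ideal.span (Set.range f) = ⊤ := by
  have hgen : IsUnit (Submodule.IsPrincipal.generator (Ideal.span (Set.range f))) :=
    hf _ fun i => (Submodule.IsPrincipal.mem_iff_generator_dvd _).mp
      (Ideal.subset_span (Set.mem_range_self i))
  exact Ideal.eq_top_of_isUnit_mem _ (Submodule.IsPrincipal.generator_mem _) hgen

end Ideal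

section Valuation

variable {K L Γ ι : Type*} [CommSemiring K] [Ring L] [Algebra K L] [LinearOrderedCommGroupWithZero Γ]
  (v : Valuation L Γ) [v.IsTrivialOn K]

lemma valuation_aeval_le_one {w : L} (hw : v w ≤ 1) (f : K[X]) : v (aeval w f) ≤ 1 := by
  rw [aeval_eq_sum_range]
  refine v.map_sum_le fun k _ => ?_
  rw [Algebra.smul_def, map_mul, map_pow]
  exact mul_le_one' (Valuation.IsTrivialOn.valuation_algebraMap_le_one v _) (pow_le_one' hw k)

lemma one_le_valuation_aeval_of_one_lt {w : L} (hw : 1 < v w) {f : K[X]} (hf : f ≠ 0) :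
    1 ≤ v (aeval w f) := by
  rw [valuation_aeval_eq_valuation_X_pow_natDegree_of_one_lt_valuation_X w hw hf]
  exact one_le_pow_of_one_le' hw.le _

lemma valuation_aeval_lt_one_of_mem_span {w : L} {s : Set K[X]}
    (hs : ∀ g ∈ s, v (aeval w g) < 1) {f : K[X]} (hf : f ∈ Ideal.span s) :
    v (aeval w f) < 1 := by
  rcases le_or_gt (v w) 1 with hw | hw
  · induction hf using Submodule.span_induction with
    | mem g hg => exact hs g hg
    | zero => simp
    | add g h _ _ hg hh =>
      rw [map_add]
      exact v.map_add_lt hg hh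
    | smul c g _ hg =>
      rw [smul_eq_mul, map_mul, map_mul]
      exact mul_lt_of_le_one_of_lt (valuation_aeval_le_one v hw c) hg
  · have hs_zero : ∀ g ∈ s, g = 0 := fun g hg => by_contra fun hg_ne =>
      (hs g hg).not_ge (one_le_valuation_aeval_of_one_lt v hw hg_ne)
    have hf_zero : f = 0 := by rwa [Ideal.span_eq_bot.mpr hs_zero, Ideal.mem_bot] at hf
    simp [hf_zero]

lemma exists_one_le_valuation_aeval {q : ι → K[X]} (hq : Ideal.span (Set.range q) = ⊤) (w : L) :
    ∃ i, 1 ≤ v (aeval w (q i)) := by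
  by_contra! hlt
  have hone : v (aeval w (1 : K[X])) < 1 :=
    valuation_aeval_lt_one_of_mem_span v (Set.forall_mem_range.mpr hlt)
      ((Ideal.eq_top_iff_one _).mp hq)
  simp at hone

lemma valuation_le_one_of_forall_mul_aeval_le_one {q : ι → K[X]} (hq : Ideal.span (Set.range q) = ⊤)
    {x w : L} (hx : ∀ i, v (x * aeval w (q i)) ≤ 1) : v x ≤ 1 := by
  obtain ⟨i, hi⟩ := exists_one_le_valuation_aeval v hq w
  calc v x ≤ v x * v (aeval w (q i)) := le_mul_of_one_le_right' hi
    _ = v (x * aeval w (q i)) := (map_mul v _ _).symm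
    _ ≤ 1 := hx i

end Valuation

section TrivialOnField

variable {K L Γ : Type*} [Field K] [Ring L] [Algebra K L] [LinearOrderedCommGroupWithZero Γ]

lemma isTrivialOn_of_forall_valuation_algebraMap_le_one {v : Valuation L Γ}
    (hv : ∀ a : K, v (algebraMap K L a) ≤ 1) : v.IsTrivialOn K where
  eq_one a ha := by
    have hmul : v (algebraMap K L a) * v (algebraMap K L a⁻¹) = 1 := by
      rw [← map_mul, ← map_mul, mul_inv_cancel₀ ha, map_one, map_one]
    refine (hv a).antisymm ?_
    calc 1 = v (algebraMap K L a) * v (algebraMap K L a⁻¹) := hmul.symm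
      _ ≤ v (algebraMap K L a) := mul_le_of_le_one_right' (hv a⁻¹)

end TrivialOnField

section Integral

variable {R L : Type*} [CommRing R] [Field L] [Algebra R L]

lemma isIntegral_of_forall_mem_valuationSubring {x : L}
    (hx : ∀ V : ValuationSubring L, (∀ r : R, algebraMap R L r ∈ V) → x ∈ V) :
    IsIntegral R x := by
  by_contra hx_not
  obtain ⟨V, hRV, hxV⟩ :=
    (integralClosure R L).toSubring.exists_le_valuationSubring_of_isIntegrallyClosedIn hx_not
  exact hxV (hx V fun r => hRV (algebraMap_mem (integralClosure R L) r))

lemma isIntegral_of_forall_algebraMap_eq_mul_aeval {K ι : Type*} [Field K] [Algebra K R]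
    [Algebra K L] [IsScalarTower K R L] {q : ι → K[X]} (hq : Ideal.span (Set.range q) = ⊤)
    {x w : L} {p : ι → R} (hp : ∀ i, algebraMap R L (p i) = x * aeval w (q i)) :
    IsIntegral R x := by
  refine isIntegral_of_forall_mem_valuationSubring fun V hV => ?_
  have hV_le (r : R) : V.valuation (algebraMap R L r) ≤ 1 := (V.valuation_le_one_iff _).mpr (hV r)
  have : V.valuation.IsTrivialOn K := isTrivialOn_of_forall_valuation_algebraMap_le_one fun a => by
    rw [IsScalarTower.algebraMap_apply K R L]
    exact hV_le _
  exact (V.valuation_le_one_iff x).mp <|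
    valuation_le_one_of_forall_mul_aeval_le_one V.valuation hq fun i => hp i ▸ hV_le (p i)

lemma isUnit_of_isIntegral_div [IsIntegrallyClosedIn R L] {a b : R} (hab : IsCoprime a b)
    (hb : b ≠ 0) (hint : IsIntegral R (algebraMap R L a / algebraMap R L b)) : IsUnit b := by
  have hinj : Function.Injective (algebraMap R L) := IsIntegralClosure.algebraMap_injective R R L
  have hb_map : algebraMap R L b ≠ 0 := (map_ne_zero_iff _ hinj).mpr hb
  obtain ⟨c, hc⟩ := IsIntegrallyClosedIn.algebraMap_eq_of_integral hint
  have hdvd : b ∣ a := ⟨c, hinj <| by rw [map_mul, hc, mul_div_cancel₀ _ hb_map]⟩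
  exact hab.isUnit_of_dvd' hdvd dvd_rfl

end Integral

theorem stmt_2_general {K R L ι : Type*} [Field K] [CommRing R] [Field L] [Algebra K R]
    [Algebra R L] [Algebra K L] [IsScalarTower K R L] [IsIntegrallyClosedIn R L]
    (q : ι → K[X]) (hgcd : ∀ d : K[X], (∀ i, d ∣ q i) → IsUnit d) (ψ : L) (p : ι → R)
    (A B : R) (hAB : IsCoprime A B) (hB : B ≠ 0)
    (heq : ∀ i, algebraMap R L (p i) = (algebraMap R L A / algebraMap R L B) * aeval ψ (q i)) :
    IsUnit B :=
  isUnit_of_isIntegral_div hAB hB <|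
    isIntegral_of_forall_algebraMap_eq_mul_aeval (span_range_eq_top_of_forall_dvd_isUnit hgcd) heq

/-- Lemma 5 (Bt): `B(t)` is a (nonzero) constant, i.e. a unit of `ℝ[X]`. -/
theorem stmt_2 (q : Fin 3 → ℝ[X])
    (hgcd : ∀ d : ℝ[X], (∀ i, d ∣ q i) → IsUnit d)
    (n : ℕ) (hn : n = max (max (q 0).natDegree (q 1).natDegree) (q 2).natDegree)
    (α β γ δ : ℝ) (hm : α * δ - β * γ ≠ 0)
    (ψ : RatFunc ℝ)
    (hψ : ψ = algebraMap ℝ[X] (RatFunc ℝ) (C α * X + C β) /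
              algebraMap ℝ[X] (RatFunc ℝ) (C γ * X + C δ))
    (Q : Matrix (Fin 3) (Fin 3) ℝ)
    (A B : ℝ[X]) (hAB : IsCoprime A B) (hB : B ≠ 0)
    (heq : ∀ i, algebraMap ℝ[X] (RatFunc ℝ) (∑ j, C (Q i j) * q j) =
        (algebraMap ℝ[X] (RatFunc ℝ) A / algebraMap ℝ[X] (RatFunc ℝ) B) *
          Polynomial.aeval ψ (q i)) :
    IsUnit B := by
  have : IsIntegrallyClosedIn ℝ[X] (RatFunc ℝ) :=
    (isIntegrallyClosed_iff_isIntegrallyClosedIn _).mp inferInstance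
  exact stmt_2_general q hgcd ψ (fun i => ∑ j, C (Q i j) * q j) A B hAB hB heq
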